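/- Let n ≥ 1 and let A be an n×n real symmetric matrix with zero diagonal. Then the order-4 cycle count statistic satisfies C_4 = trace(A^4) − 2·𝟙ₙᵀ(A∘A)²𝟙ₙ + 𝟙ₙᵀ(A∘A∘A∘A)𝟙ₙ, where the sum defining C_4 runs over pairwise distinct indices i₁,i₂,i₃,i₄ ∈ {1,…,n}. -/

import Mathlib

open Matrix

/-- For an `n × n` real symmetric matrix `A` with zero diagonal (`n ≥ 1`), the order-4
cycle count statistic equals
`trace (A^4) - 2 ⬝ 𝟙ₙᵀ (A ∘ A)² 𝟙ₙ + 𝟙ₙᵀ (A ∘ A ∘ A ∘ A) 𝟙ₙ`. -/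
theorem cycle_count_four_formula
    (n : ℕ) (hn : 1 ≤ n) (A : Matrix (Fin n) (Fin n) ℝ)
    (hsym : A.IsSymm) (hdiag : ∀ i, A i i = 0) :
    ∑ i₁ : Fin n, ∑ i₂ : Fin n, ∑ i₃ : Fin n, ∑ i₄ : Fin n,
      (if i₁ ≠ i₂ ∧ i₁ ≠ i₃ ∧ i₁ ≠ i₄ ∧ i₂ ≠ i₃ ∧ i₂ ≠ i₄ ∧ i₃ ≠ i₄
        then A i₁ i₂ * A i₂ i₃ * A i₃ i₄ * A i₄ i₁ else 0)
      = (A ^ 4).trace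
        - 2 * ((1 : Fin n → ℝ) ⬝ᵥ (((A ⊙ A) ^ 2) *ᵥ (1 : Fin n → ℝ)))
        + ((1 : Fin n → ℝ) ⬝ᵥ ((A ⊙ A ⊙ A ⊙ A) *ᵥ (1 : Fin n → ℝ))) := by
  have hs : ∀ i j, A i j = A j i := fun i j => hsym.apply j i
  have hP : ∀ a b c d : Fin n,
      (if a ≠ b ∧ a ≠ c ∧ a ≠ d ∧ b ≠ c ∧ b ≠ d ∧ c ≠ d
        then A a b * A b c * A c d * A d a else 0)
      = A a b * A b c * A c d * A d a
        - (if a = c then A a b * A b c * A c d * A d a else 0)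
        - (if b = d then A a b * A b c * A c d * A d a else 0)
        + (if b = d then (if a = c then A a b * A b c * A c d * A d a else 0) else 0) := by
    intro a b c d
    by_cases h1 : a = b
    · subst h1; simp [hdiag]
    by_cases h2 : b = c
    · subst h2; simp [hdiag]
    by_cases h3 : c = d
    · subst h3; simp [hdiag]
    by_cases h4 : a = d
    · subst h4; simp [hdiag]
    by_cases h5 : a = c <;> by_cases h6 : b = d <;> simp [h1, h2, h3, h4, h5, h6]
  have e1 : (A ^ 4).trace = ∑ a, ∑ b, ∑ c, ∑ d, A a b * A b c * A c d * A d a := by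
    have h4 : A ^ 4 = A * (A * (A * A)) := by simp only [pow_succ, pow_zero, one_mul, mul_assoc]
    rw [h4]
    simp only [Matrix.trace, Matrix.diag, Matrix.mul_apply, Finset.mul_sum, mul_assoc]
  have e2 : (1 : Fin n → ℝ) ⬝ᵥ (((A ⊙ A) ^ 2) *ᵥ (1 : Fin n → ℝ))
      = ∑ a, ∑ b, ∑ c, A a c * A a c * (A c b * A c b) := by
    simp [dotProduct, mulVec, pow_two, Matrix.mul_apply]
  have e3 : (1 : Fin n → ℝ) ⬝ᵥ ((A ⊙ A ⊙ A ⊙ A) *ᵥ (1 : Fin n → ℝ))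
      = ∑ a, ∑ b, A a b * A a b * A a b * A a b := by
    simp [dotProduct, mulVec]
  have f1 : ∑ a, ∑ b, ∑ c, ∑ d, (if a = c then A a b * A b c * A c d * A d a else 0)
      = ∑ a, ∑ b, ∑ c, A a c * A a c * (A c b * A c b) := by
    have : ∀ a b : Fin n, ∑ c, ∑ d, (if a = c then A a b * A b c * A c d * A d a else 0)
        = ∑ d, A a b * A b a * A a d * A d a := by
      intro a b
      rw [Finset.sum_comm]
      simp
    simp only [this]
    rw [Finset.sum_comm]
    refine Finset.sum_congr rfl fun b _ => ?_
    rw [Finset.sum_comm]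
    refine Finset.sum_congr rfl fun d _ => Finset.sum_congr rfl fun a _ => ?_
    rw [hs a b, hs d a]; ring
  have f2 : ∑ a, ∑ b, ∑ c, ∑ d, (if b = d then A a b * A b c * A c d * A d a else 0)
      = ∑ a, ∑ b, ∑ c, A a c * A a c * (A c b * A c b) := by
    simp only [Finset.sum_ite_eq, Finset.mem_univ, if_true]
    refine Finset.sum_congr rfl fun a _ => ?_
    rw [Finset.sum_comm]
    refine Finset.sum_congr rfl fun c _ => Finset.sum_congr rfl fun b _ => ?_
    rw [hs c b, hs b a]; ring
  have f3 : ∑ a, ∑ b, ∑ c, ∑ d,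
      (if b = d then (if a = c then A a b * A b c * A c d * A d a else 0) else 0)
      = ∑ a, ∑ b, A a b * A a b * A a b * A a b := by
    simp only [Finset.sum_ite_eq, Finset.mem_univ, if_true]
    refine Finset.sum_congr rfl fun a _ => Finset.sum_congr rfl fun b _ => ?_
    rw [hs b a]
  simp only [hP, Finset.sum_add_distrib, Finset.sum_sub_distrib]
  rw [e1, e2, e3, f1, f2, f3]
  ring
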